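/- Let n ≥ 2 be an integer and g ∈ F_q[t] a nonzero polynomial with exactly r distinct monic irreducible divisors. Then |∑_{f monic, deg f = n, gcd(f,g)=1} μ(f)| ≤ (q + 1) · C(n + r − 1, n), where C(·,·) denotes a binomial coefficient (equivalently, the sum of μ(f)χ₀(f) over monic f of degree n, where χ₀ is the trivial character modulo R_{s,g} extended by zero to polynomials not coprime to g). -/

import Mathlib

/-!
Common setup: `F_q((1/t))` is realized as `LaurentSeries Fq` (formal Laurent series in `X`)
under the identification `X = 1/t`; thus the coefficient of `t^i` is the coefficient of
`X^(-i)`, and `𝕋` consists of series supported on positive powers of `X`.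
-/

open Polynomial
open scoped Classical

/-- The element `t` of `F_q((1/t))`, i.e. the Laurent series `X⁻¹`. -/
noncomputable def tElem (Fq : Type) [Field Fq] : LaurentSeries Fq :=
  HahnSeries.single (-1 : ℤ) 1

/-- The natural embedding of `F_q[t]` into `F_q((1/t))`: evaluate the polynomial at `t`. -/
noncomputable def toL {Fq : Type} [Field Fq] (f : Polynomial Fq) : LaurentSeries Fq :=
  Polynomial.aeval (tElem Fq) f

/-- The norm on `F_q((1/t))`: `|x| = q^j` where `j` is the largest index with `x_j ≠ 0`
(in `t`-coefficients, so `j = -(order of the Hahn series)`), and `|0| = 0`. -/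
noncomputable def nrm {Fq : Type} [Field Fq] [Fintype Fq] (x : LaurentSeries Fq) : ℝ :=
  if x = 0 then 0 else (Fintype.card Fq : ℝ) ^ (-(HahnSeries.order x))

/-- `𝕋 = {∑_{i<0} x_i t^i}`: Laurent series supported on negative powers of `t`. -/
def TT (Fq : Type) [Field Fq] : Set (LaurentSeries Fq) :=
  {x | ∀ n : ℤ, n ≤ 0 → x.coeff n = 0}

/-- The exponential `e_q(x) = ψ(x_{-1})`, where `ψ(y) = e^{2πi·tr(y)/p}` with
`tr : F_q → F_p` the field trace, and `x_{-1}` is the coefficient of `t^{-1}` in `x`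
(the coefficient of `X^1` of the Hahn series). -/
noncomputable def eQ {Fq : Type} [Field Fq] [Fintype Fq] (p : ℕ) [CharP Fq p]
    (x : LaurentSeries Fq) : ℂ :=
  letI := ZMod.algebra Fq p
  Complex.exp (2 * Real.pi * Complex.I *
    (((Algebra.trace (ZMod p) Fq (x.coeff 1)).val : ℂ) / (p : ℂ)))

/-- The Möbius function on `F_q[t]`: `μ(f) = (-1)^r` if `f` is a product of `r` distinct
irreducibles, and `μ(f) = 0` otherwise. -/
noncomputable def mu {Fq : Type} [Field Fq] (f : Polynomial Fq) : ℤ :=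
  if Squarefree f then
    (-1) ^ Multiset.card (UniqueFactorizationMonoid.normalizedFactors f)
  else 0

/-- The monic polynomial `X^n + ∑_{i<n} c_i X^i`; monic polynomials of degree `n`
are exactly the `stdPoly n c` for a unique `c : Fin n → Fq`. -/
noncomputable def stdPoly {Fq : Type} [Field Fq] (n : ℕ) (c : Fin n → Fq) : Polynomial Fq :=
  X ^ n + ∑ i : Fin n, C (c i) * X ^ (i : ℕ)

/-- The polynomial `∑_{i<k} c_i X^i` of degree `< k`. -/
noncomputable def ltPoly {Fq : Type} [Field Fq] (k : ℕ) (c : Fin k → Fq) : Polynomial Fq :=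
  ∑ i : Fin k, C (c i) * X ^ (i : ℕ)

/-- Hayes' relation `R_{s,g}` on monic polynomials:
`a ≡ b mod R_{s,g}` iff `g ∣ a - b` and `|a/t^{deg a} - b/t^{deg b}| < q^{-s}`.
(Here `1/t^{deg a}` is the Laurent series `X^{deg a}`.) -/
def Requiv {Fq : Type} [Field Fq] [Fintype Fq] (s : ℕ) (g a b : Polynomial Fq) : Prop :=
  g ∣ (a - b) ∧
  nrm (toL a * HahnSeries.single (a.natDegree : ℤ) 1 -
        toL b * HahnSeries.single (b.natDegree : ℤ) 1)
    < (Fintype.card Fq : ℝ) ^ (-(s : ℤ))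

/-- `φ(g)`: the number of invertible residue classes modulo `g`. -/
noncomputable def phi {Fq : Type} [Field Fq] (g : Polynomial Fq) : ℕ :=
  Nat.card ((Polynomial Fq ⧸ Ideal.span {g})ˣ)

/-- `χ` is (the extension by zero of) a character of the unit group `R*_{s,g}` of the quotient
monoid of monic polynomials modulo `R_{s,g}`: it vanishes off monic polynomials, it is
multiplicative on monic polynomials, it is constant on `R_{s,g}`-classes, and it vanishes at a
monic polynomial exactly when that polynomial is not coprime to `g`.  (Such functions correspond
bijectively to the characters of the finite abelian group `R*_{s,g}`.) -/
def IsRChar {Fq : Type} [Field Fq] [Fintype Fq] (s : ℕ) (g : Polynomial Fq)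
    (χ : Polynomial Fq → ℂ) : Prop :=
  (∀ f : Polynomial Fq, ¬ f.Monic → χ f = 0) ∧
  (∀ a b : Polynomial Fq, a.Monic → b.Monic → χ (a * b) = χ a * χ b) ∧
  (∀ a b : Polynomial Fq, a.Monic → b.Monic → Requiv s g a b → χ a = χ b) ∧
  (∀ f : Polynomial Fq, f.Monic → (χ f = 0 ↔ ¬ IsCoprime f g))


theorem stdPoly_coeff {Fq : Type} [Field Fq] (n : ℕ) (c : Fin n → Fq) (i : Fin n) :
    (stdPoly n c).coeff i = c i := by
  unfold stdPoly
  simp only [coeff_add, coeff_X_pow, finsetSum_coeff, coeff_C_mul]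
  rw [if_neg (by have := i.2; omega), zero_add, Finset.sum_eq_single i]
  · simp
  · intro b _ hb
    rw [if_neg (by intro h; exact hb (Fin.ext h.symm)), mul_zero]
  · simp

theorem ltPart_degree {Fq : Type} [Field Fq] (n : ℕ) (c : Fin n → Fq) :
    (∑ i : Fin n, C (c i) * X ^ (i : ℕ)).degree < (n : WithBot ℕ) := by
  rw [Polynomial.degree_lt_iff_coeff_zero]
  intro m hm
  simp only [finsetSum_coeff, coeff_C_mul, coeff_X_pow]
  apply Finset.sum_eq_zero
  intro i _
  rw [if_neg (by have := i.2; omega), mul_zero]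

theorem stdPoly_monic {Fq : Type} [Field Fq] (n : ℕ) (c : Fin n → Fq) :
    (stdPoly n c).Monic := monic_X_pow_add (ltPart_degree n c)

theorem stdPoly_natDegree {Fq : Type} [Field Fq] (n : ℕ) (c : Fin n → Fq) :
    (stdPoly n c).natDegree = n := by
  unfold stdPoly
  rw [natDegree_eq_of_degree_eq_some]
  rw [degree_add_eq_left_of_degree_lt] <;> rw [degree_X_pow]
  exact ltPart_degree n c

theorem stdPoly_injective {Fq : Type} [Field Fq] (n : ℕ) :
    Function.Injective (stdPoly (Fq := Fq) n) := by
  intro c d h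
  funext i
  rw [← stdPoly_coeff n c i, h, stdPoly_coeff]

theorem exists_stdPoly {Fq : Type} [Field Fq] {n : ℕ} {f : Polynomial Fq} (hf : f.Monic)
    (hn : f.natDegree = n) : ∃ c, stdPoly n c = f := by
  refine ⟨fun i => f.coeff i, ?_⟩
  subst hn
  conv_rhs => rw [hf.as_sum]
  unfold stdPoly
  rw [Finset.sum_range]

/-- Monic polynomials of degree `n`. -/
noncomputable def monD (Fq : Type) [Field Fq] [Fintype Fq] (n : ℕ) : Finset (Polynomial Fq) :=
  Finset.univ.image (stdPoly n)

theorem mem_monD {Fq : Type} [Field Fq] [Fintype Fq] {n : ℕ} {f : Polynomial Fq} :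
    f ∈ monD Fq n ↔ f.Monic ∧ f.natDegree = n := by
  unfold monD
  simp only [Finset.mem_image, Finset.mem_univ, true_and]
  constructor
  · rintro ⟨c, rfl⟩
    exact ⟨stdPoly_monic n c, stdPoly_natDegree n c⟩
  · rintro ⟨h1, h2⟩
    exact exists_stdPoly h1 h2

theorem card_monD (Fq : Type) [Field Fq] [Fintype Fq] (n : ℕ) :
    (monD Fq n).card = Fintype.card Fq ^ n := by
  unfold monD
  rw [Finset.card_image_of_injective _ (stdPoly_injective n)]
  simp

/-- Sum of `h` over monic polynomials of degree `n` with no divisor in `S`. -/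
noncomputable def sv {Fq : Type} [Field Fq] [Fintype Fq] (h : Polynomial Fq → ℤ)
    (S : Finset (Polynomial Fq)) (n : ℕ) : ℤ :=
  ∑ f ∈ (monD Fq n).filter (fun f => ∀ ω ∈ S, ¬ ω ∣ f), h f

theorem sum_split {Fq : Type} [Field Fq] [Fintype Fq] (h : Polynomial Fq → ℤ)
    (S : Finset (Polynomial Fq)) (hS : ∀ ω ∈ S, ω.Monic ∧ Irreducible ω)
    (ω : Polynomial Fq) (hω : ω.Monic ∧ Irreducible ω) (hn : ω ∉ S) (n : ℕ) :
    sv h S n = sv h (insert ω S) n +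
      if ω.natDegree ≤ n then sv (fun f => h (ω * f)) S (n - ω.natDegree) else 0 := by
  unfold sv
  rw [← Finset.sum_filter_add_sum_filter_not _ (fun f => ¬ ω ∣ f)]
  congr 1
  · apply Finset.sum_congr _ (fun _ _ => rfl)
    ext f
    simp only [Finset.mem_filter, Finset.mem_insert, forall_eq_or_imp]
    tauto
  · split_ifs with hd
    · symm
      apply Finset.sum_bij (fun f _ => ω * f)
      · intro f hf
        simp only [Finset.mem_filter, mem_monD] at hf ⊢
        obtain ⟨⟨h1, h2⟩, h3⟩ := hf
        refine ⟨⟨⟨hω.1.mul h1, ?_⟩, ?_⟩, ?_⟩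
        · rw [hω.1.natDegree_mul h1, h2]; omega
        · intro p hp hd
          rcases (hS p hp).2.prime.dvd_or_dvd hd with h4 | h4
          · have := eq_of_monic_of_associated (hS p hp).1 hω.1
              ((hS p hp).2.associated_of_dvd hω.2 h4)
            exact hn (this ▸ hp)
          · exact h3 p hp h4
        · simp
      · intro a _ b _ hab
        exact mul_left_cancel₀ hω.2.ne_zero hab
      · intro f hf
        simp only [Finset.mem_filter, mem_monD, not_not] at hf
        obtain ⟨⟨⟨h1, h2⟩, h3⟩, ⟨k, rfl⟩⟩ := hf
        have hk := hω.1.of_mul_monic_left h1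
        rw [hω.1.natDegree_mul hk] at h2
        refine ⟨k, ?_, rfl⟩
        simp only [Finset.mem_filter, mem_monD]
        exact ⟨⟨hk, by omega⟩, fun p hp hd => h3 p hp (hd.mul_left _)⟩
      · intros; rfl
    · apply Finset.sum_eq_zero
      intro f hf
      exfalso
      simp only [Finset.mem_filter, mem_monD, not_not] at hf
      have := natDegree_le_of_dvd hf.2 hf.1.1.1.ne_zero
      omega

theorem mu_mul_dvd {Fq : Type} [Field Fq] {ω f : Polynomial Fq} (hω : Irreducible ω)
    (h : ω ∣ f) : mu (ω * f) = 0 := by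
  unfold mu
  rw [if_neg]
  intro hs
  exact hω.not_isUnit (hs ω (mul_dvd_mul_left ω h))

theorem mu_mul_not_dvd {Fq : Type} [Field Fq] {ω f : Polynomial Fq} (hω : Irreducible ω)
    (h : ¬ ω ∣ f) : mu (ω * f) = - mu f := by
  have hf : f ≠ 0 := by rintro rfl; simp at h
  have hs : Squarefree (ω * f) ↔ Squarefree f := by
    rw [squarefree_mul_iff]
    have : IsRelPrime ω f := (hω.isRelPrime_iff_not_dvd).2 h
    exact ⟨fun h => h.2.2, fun h => ⟨this, hω.squarefree, h⟩⟩
  unfold mu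
  rw [hs, UniqueFactorizationMonoid.normalizedFactors_mul hω.ne_zero hf,
    UniqueFactorizationMonoid.normalizedFactors_irreducible hω]
  split_ifs
  · simp [pow_add]
  · simp

theorem mu_rec {Fq : Type} [Field Fq] [Fintype Fq]
    (S : Finset (Polynomial Fq)) (hS : ∀ ω ∈ S, ω.Monic ∧ Irreducible ω)
    (ω : Polynomial Fq) (hω : ω.Monic ∧ Irreducible ω) (hn : ω ∉ S) (n : ℕ) :
    sv mu S n = sv mu (insert ω S) n -
      if ω.natDegree ≤ n then sv mu (insert ω S) (n - ω.natDegree) else 0 := by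
  rw [sum_split mu S hS ω hω hn n]
  split_ifs with hd
  · rw [sub_eq_add_neg]
    congr 1
    unfold sv
    rw [← Finset.sum_filter_add_sum_filter_not _ (fun f => ω ∣ f), Finset.sum_eq_zero, zero_add,
      ← Finset.sum_neg_distrib]
    · apply Finset.sum_congr
      · ext f
        simp only [Finset.mem_filter, Finset.mem_insert, forall_eq_or_imp]
        tauto
      · intro f hf
        simp only [Finset.mem_filter, Finset.mem_insert, forall_eq_or_imp] at hf
        exact mu_mul_not_dvd hω.2 hf.2.1
    · intro f hf
      exact mu_mul_dvd hω.2 (Finset.mem_filter.1 hf).2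
  · simp

theorem mu_ser {Fq : Type} [Field Fq] [Fintype Fq]
    (S : Finset (Polynomial Fq)) (hS : ∀ ω ∈ S, ω.Monic ∧ Irreducible ω)
    (ω : Polynomial Fq) (hω : ω.Monic ∧ Irreducible ω) (hn : ω ∉ S) :
    PowerSeries.mk (sv mu S) =
      PowerSeries.mk (sv mu (insert ω S)) * (1 - PowerSeries.X ^ ω.natDegree) := by
  ext n
  rw [mul_sub, mul_one, map_sub, PowerSeries.coeff_mul_X_pow']
  simpa using mu_rec S hS ω hω hn n

theorem one_ser {Fq : Type} [Field Fq] [Fintype Fq]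
    (S : Finset (Polynomial Fq)) (hS : ∀ ω ∈ S, ω.Monic ∧ Irreducible ω)
    (ω : Polynomial Fq) (hω : ω.Monic ∧ Irreducible ω) (hn : ω ∉ S) :
    PowerSeries.mk (sv (fun _ : Polynomial Fq => 1) (insert ω S)) =
      PowerSeries.mk (sv (fun _ : Polynomial Fq => 1) S) * (1 - PowerSeries.X ^ ω.natDegree) := by
  ext n
  rw [mul_sub, mul_one, map_sub, PowerSeries.coeff_mul_X_pow']
  have := sum_split (fun _ : Polynomial Fq => 1) S hS ω hω hn n
  simp only [PowerSeries.coeff_mk]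
  rw [this]
  ring

theorem prod_inv {Fq : Type} [Field Fq] [Fintype Fq]
    (S : Finset (Polynomial Fq)) (hS : ∀ ω ∈ S, ω.Monic ∧ Irreducible ω) :
    PowerSeries.mk (sv mu S) * PowerSeries.mk (sv (fun _ : Polynomial Fq => 1) S) =
    PowerSeries.mk (sv (Fq := Fq) mu ∅) *
      PowerSeries.mk (sv (fun _ : Polynomial Fq => 1) ∅) := by
  induction S using Finset.induction_on with
  | empty => rfl
  | insert ω S hn ih =>
    have hS' : ∀ p ∈ S, p.Monic ∧ Irreducible p := fun p hp => hS p (Finset.mem_insert_of_mem hp)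
    have hω := hS ω (Finset.mem_insert_self _ _)
    rw [← ih hS', one_ser S hS' ω hω hn, mu_ser S hS' ω hω hn]
    ring

theorem sv_zero {Fq : Type} [Field Fq] [Fintype Fq] (h : Polynomial Fq → ℤ)
    (S : Finset (Polynomial Fq)) (hS : ∀ ω ∈ S, ω.Monic ∧ Irreducible ω) : sv h S 0 = h 1 := by
  have : (monD Fq 0).filter (fun f => ∀ ω ∈ S, ¬ ω ∣ f) = {1} := by
    ext f
    simp only [Finset.mem_filter, mem_monD, Finset.mem_singleton]
    constructor
    · rintro ⟨⟨h1, h2⟩, _⟩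
      exact h1.natDegree_eq_zero.1 h2
    · rintro rfl
      exact ⟨⟨monic_one, natDegree_one⟩,
        fun ω hω hd => (hS ω hω).2.not_isUnit (isUnit_of_dvd_one hd)⟩
  unfold sv
  rw [this, Finset.sum_singleton]

theorem mu_one' {Fq : Type} [Field Fq] : mu (1 : Polynomial Fq) = 1 := by
  unfold mu; simp

/-- Monic irreducibles of degree at most `n`. -/
noncomputable def irrLe (Fq : Type) [Field Fq] [Fintype Fq] (n : ℕ) : Finset (Polynomial Fq) :=
  ((Finset.range (n + 1)).biUnion (monD Fq)).filter Irreducible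

theorem mem_irrLe {Fq : Type} [Field Fq] [Fintype Fq] {n : ℕ} {f : Polynomial Fq} :
    f ∈ irrLe Fq n ↔ (f.Monic ∧ f.natDegree ≤ n) ∧ Irreducible f := by
  simp [irrLe, mem_monD]
  tauto

theorem sv_irrLe {Fq : Type} [Field Fq] [Fintype Fq] (h : Polynomial Fq → ℤ) {n k : ℕ}
    (hk : k ≤ n) (hk0 : k ≠ 0) : sv h (irrLe Fq n) k = 0 := by
  unfold sv
  apply Finset.sum_eq_zero
  intro f hf
  exfalso
  simp only [Finset.mem_filter, mem_monD] at hf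
  obtain ⟨⟨h1, h2⟩, h3⟩ := hf
  have hu : ¬ IsUnit f := by
    intro hu
    have := natDegree_eq_zero_of_isUnit hu
    omega
  obtain ⟨p, hp', hm', hd⟩ := exists_monic_irreducible_factor f hu
  refine h3 p (mem_irrLe.2 ⟨⟨hp', ?_⟩, hm'⟩) hd
  have := natDegree_le_of_dvd hd h1.ne_zero
  omega

theorem prod_one (Fq : Type) [Field Fq] [Fintype Fq] :
    PowerSeries.mk (sv (Fq := Fq) mu ∅) *
      PowerSeries.mk (sv (fun _ : Polynomial Fq => 1) ∅) = 1 := by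
  ext n
  have hS : ∀ ω ∈ irrLe Fq n, ω.Monic ∧ Irreducible ω := fun ω hω =>
    ⟨(mem_irrLe.1 hω).1.1, (mem_irrLe.1 hω).2⟩
  rw [← prod_inv (irrLe Fq n) hS, PowerSeries.coeff_mul, PowerSeries.coeff_one]
  simp only [PowerSeries.coeff_mk]
  split_ifs with h
  · subst h
    simp [sv_zero _ _ hS, mu_one']
  · apply Finset.sum_eq_zero
    rintro ⟨a, b⟩ hab
    have hab := Finset.HasAntidiagonal.mem_antidiagonal.1 hab
    dsimp only at hab ⊢
    by_cases ha : a = 0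
    · rw [sv_irrLe (fun _ => 1) (n := n) (k := b) (by omega) (by omega), mul_zero]
    · rw [sv_irrLe mu (n := n) (k := a) (by omega) ha, zero_mul]

theorem base_ser (Fq : Type) [Field Fq] [Fintype Fq] :
    PowerSeries.mk (sv (Fq := Fq) mu ∅) =
      1 - PowerSeries.C (Fintype.card Fq : ℤ) * PowerSeries.X := by
  have h1 : PowerSeries.mk (sv (fun _ : Polynomial Fq => 1) ∅) *
      (1 - PowerSeries.C (Fintype.card Fq : ℤ) * PowerSeries.X) = 1 := by
    ext n
    have : sv (fun _ : Polynomial Fq => 1) ∅ = fun n => (Fintype.card Fq : ℤ) ^ n := by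
      funext n
      simp [sv, card_monD]
    rw [this, mul_sub, mul_one, mul_left_comm, map_sub, PowerSeries.coeff_C_mul]
    cases n with
    | zero => simp
    | succ n => simp [PowerSeries.coeff_succ_mul_X, PowerSeries.coeff_one, pow_succ']
  have h2 := prod_one Fq
  calc _ = PowerSeries.mk (sv (Fq := Fq) mu ∅) * (PowerSeries.mk (sv (fun _ : Polynomial Fq => 1) ∅) *
      (1 - PowerSeries.C (Fintype.card Fq : ℤ) * PowerSeries.X)) := by rw [h1, mul_one]
    _ = _ := by rw [← mul_assoc, h2, one_mul]

/-- The majorant. -/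
def bnd (q : ℕ) : ℕ → ℕ → ℕ
  | 0, n => if n = 0 then 1 else if n = 1 then q else 0
  | r + 1, n => ∑ k ∈ Finset.range (n + 1), bnd q r k

theorem bnd_mono (q r : ℕ) {m n : ℕ} (h : m ≤ n) : bnd q (r + 1) m ≤ bnd q (r + 1) n := by
  unfold bnd
  exact Finset.sum_le_sum_of_subset (Finset.range_subset_range.2 (by omega))

theorem bnd_succ (q r n : ℕ) : bnd q (r + 1) (n + 1) = bnd q (r + 1) n + bnd q r (n + 1) := by
  simp only [bnd]
  rw [Finset.sum_range_succ _ (n + 1)]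

theorem bnd_zero (q r : ℕ) : bnd q r 0 = 1 := by
  induction r with
  | zero => simp [bnd]
  | succ r ih => simp [bnd, ih]

theorem sv_bound {Fq : Type} [Field Fq] [Fintype Fq]
    (S : Finset (Polynomial Fq)) (hS : ∀ ω ∈ S, ω.Monic ∧ Irreducible ω) :
    ∀ n, |sv mu S n| ≤ bnd (Fintype.card Fq) S.card n := by
  induction S using Finset.induction_on with
  | empty =>
    intro n
    have := congrArg (PowerSeries.coeff n) (base_ser Fq)
    rw [PowerSeries.coeff_mk] at this
    rw [this, map_sub, PowerSeries.coeff_C_mul, PowerSeries.coeff_one, PowerSeries.coeff_X]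
    simp only [bnd, Finset.card_empty]
    split_ifs <;> first | omega | simp
  | insert ω S hn ih =>
    have hS' : ∀ p ∈ S, p.Monic ∧ Irreducible p := fun p hp => hS p (Finset.mem_insert_of_mem hp)
    have hω := hS ω (Finset.mem_insert_self _ _)
    rw [Finset.card_insert_of_notMem hn]
    intro n
    induction n using Nat.strong_induction_on with
    | _ n ihn =>
      have hrec := mu_rec S hS' ω hω hn n
      have hb := ih hS' n
      have hpos : 0 < ω.natDegree := hω.2.natDegree_pos
      rcases n with _ | n
      · rw [sv_zero _ _ hS, mu_one', bnd_zero]; simp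
      · rw [bnd_succ]
        push_cast
        split_ifs at hrec with hd
        · have h1 := ihn (n + 1 - ω.natDegree) (by omega)
          have h2 : (bnd (Fintype.card Fq) (S.card + 1) (n + 1 - ω.natDegree) : ℤ) ≤
            bnd (Fintype.card Fq) (S.card + 1) n := by
            exact_mod_cast bnd_mono _ _ (by omega)
          rw [abs_le] at *
          constructor <;> linarith [hb.1, hb.2, h1.1, h1.2]
        · have h2 : (0 : ℤ) ≤ bnd (Fintype.card Fq) (S.card + 1) n := by positivity
          rw [abs_le] at *
          constructor <;> linarith [hb.1, hb.2]

theorem bnd_eq (q r : ℕ) : ∀ n, bnd q (r + 1) (n + 1) =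
    Nat.choose (n + 1 + r) (n + 1) + q * Nat.choose (n + r) n := by
  induction r with
  | zero =>
    intro n
    induction n with
    | zero => simp [bnd, Finset.sum_range_succ]
    | succ n ih => rw [bnd_succ, ih]; simp [bnd]
  | succ r ih =>
    intro n
    induction n with
    | zero =>
      rw [bnd_succ, ih, bnd_zero]; simp; ring
    | succ n ihn =>
      rw [bnd_succ, ihn, ih]
      have e1 := Nat.choose_succ_succ (n + 1 + (r + 1)) (n + 1)
      have e2 := Nat.choose_succ_succ (n + (r + 1)) n
      simp only [Nat.succ_eq_add_one] at e1 e2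
      rw [show n + 1 + 1 + (r + 1) = n + 1 + (r + 1) + 1 by ring, e1,
        show n + 1 + (r + 1) = n + (r + 1) + 1 by ring, e2,
        show n + 1 + 1 + r = n + (r + 1) + 1 by ring, show n + 1 + r = n + (r + 1) by ring]
      have e3 := Nat.choose_succ_succ (n + (r + 1)) n
      ring_nf

theorem bnd_le (q r n : ℕ) (hn : 2 ≤ n) : bnd q r n ≤ (q + 1) * Nat.choose (n + r - 1) n := by
  rcases r with _ | r
  · simp only [bnd]
    rw [if_neg (by omega), if_neg (by omega)]; simp
  · obtain ⟨n, rfl⟩ : ∃ m, n = m + 1 := ⟨n - 1, by omega⟩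
    rw [bnd_eq, show n + 1 + (r + 1) - 1 = n + r + 1 by omega, show n + 1 + r = n + r + 1 by ring]
    have : Nat.choose (n + r) n ≤ Nat.choose (n + r + 1) (n + 1) := by
      rw [Nat.choose_succ_succ]; omega
    nlinarith

theorem isCoprime_iff_forall {Fq : Type} [Field Fq] {f g : Polynomial Fq} (hf : f ≠ 0) :
    IsCoprime f g ↔ ∀ ω : Polynomial Fq, ω.Monic ∧ Irreducible ω ∧ ω ∣ g → ¬ ω ∣ f := by
  constructor
  · rintro h ω ⟨_, h2, h3⟩ h4
    exact h2.not_isUnit (h.isUnit_of_dvd' h4 h3)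
  · intro h
    apply isCoprime_of_irreducible_dvd (fun h => hf h.1)
    intro p hp hpf hpg
    have ha := (normalize_associated p).symm
    refine h (normalize p) ⟨monic_normalize hp.ne_zero, ha.irreducible hp, ?_⟩ ?_
    · exact ha.symm.dvd.trans hpg
    · exact ha.symm.dvd.trans hpf

/-- For `n ≥ 2` and `g ≠ 0` with exactly `r` distinct monic irreducible
divisors, `|∑_{f monic, deg f = n, (f,g)=1} μ(f)| ≤ (q+1)·C(n+r-1, n)`. -/
theorem mobius_trivial_character_sum_bound
    (Fq : Type) [Field Fq] [Fintype Fq] (n : ℕ) (hn : 2 ≤ n)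
    (g : Polynomial Fq) (hg : g ≠ 0) (r : ℕ)
    (hr : r = Nat.card {ω : Polynomial Fq // ω.Monic ∧ Irreducible ω ∧ ω ∣ g}) :
    |∑ c : Fin n → Fq, if IsCoprime (stdPoly n c) g then mu (stdPoly n c) else 0|
      ≤ ((Fintype.card Fq : ℤ) + 1) * Nat.choose (n + r - 1) n := by
  have hfin : {ω : Polynomial Fq | ω.Monic ∧ Irreducible ω ∧ ω ∣ g}.Finite := by
    apply (Finset.finite_toSet (irrLe Fq g.natDegree)).subset
    rintro ω ⟨h1, h2, h3⟩
    exact mem_irrLe.2 ⟨⟨h1, natDegree_le_of_dvd h3 hg⟩, h2⟩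
  set S := hfin.toFinset with hSdef
  have hmem : ∀ ω, ω ∈ S ↔ ω.Monic ∧ Irreducible ω ∧ ω ∣ g := by
    intro ω
    rw [hSdef, Set.Finite.mem_toFinset, Set.mem_ofPred_eq]
  have hcard : r = S.card := by
    rw [hr, hSdef, ← Set.ncard_eq_toFinset_card _ hfin]
    rfl
  have hsum : (∑ c : Fin n → Fq, if IsCoprime (stdPoly n c) g then mu (stdPoly n c) else 0)
      = sv mu S n := by
    unfold sv monD
    rw [Finset.sum_filter, Finset.sum_image (fun a _ b _ h => stdPoly_injective n h)]
    apply Finset.sum_congr rfl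
    intro c _
    have : IsCoprime (stdPoly n c) g ↔ ∀ ω ∈ S, ¬ ω ∣ stdPoly n c := by
      rw [isCoprime_iff_forall (stdPoly_monic n c).ne_zero]
      simp only [hmem]
    simp only [this]
  rw [hsum, hcard]
  refine (sv_bound S (fun ω h => ⟨((hmem ω).1 h).1, ((hmem ω).1 h).2.1⟩) n).trans ?_
  exact_mod_cast bnd_le (Fintype.card Fq) S.card n hn
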